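/- arXiv:1112.3255 — 4 statements merged into one kernel-verified Lean document; each statement's English description precedes it below -/
import Mathlib

section
/- Let W be a finite reflection group on a finite-dimensional real inner product space V and let a ∈ V be a generic point for W. Then the set of extreme points of the convex hull conv{w(a) : w ∈ W} is exactly the orbit {w(a) : w ∈ W}; in particular every orbit point w(a) is a vertex of the permutahedron Perm^a(W). -/
open scoped RealInnerProductSpace

variable {V : Type*} [NormedAddCommGroup V] [InnerProductSpace ℝ V]

/-- `s` acts as the orthogonal reflection along the nonzero vector `α`:
`s v = v - 2 (⟪v,α⟫/⟪α,α⟫) α`. -/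
def IsReflAlong (s : V ≃ₗᵢ[ℝ] V) (α : V) : Prop :=
  α ≠ 0 ∧ ∀ v : V, s v = v - ((2 * ⟪v, α⟫ / ⟪α, α⟫) • α)

/-- `s` is a reflection. -/
def IsReflection (s : V ≃ₗᵢ[ℝ] V) : Prop :=
  ∃ α : V, IsReflAlong s α

/-- A reflection group: a subgroup of the group of linear isometries of `V` generated by
the reflections it contains. -/
def IsReflectionGroup (W : Subgroup (V ≃ₗᵢ[ℝ] V)) : Prop :=
  W = Subgroup.closure {s | IsReflection s ∧ s ∈ W}

/-- `a` is a generic point for `W`: it is fixed by no reflection belonging to `W`. -/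
def IsGeneric (W : Subgroup (V ≃ₗᵢ[ℝ] V)) (a : V) : Prop :=
  ∀ s ∈ W, IsReflection s → s a ≠ a

/-- The `W`-orbit of the point `a`. -/
def orbitSet (W : Subgroup (V ≃ₗᵢ[ℝ] V)) (a : V) : Set V :=
  {x | ∃ w ∈ W, x = w a}

/-- The permutahedron `Perm^a(W)`: the convex hull of the `W`-orbit of `a`. -/
noncomputable def permutahedron (W : Subgroup (V ≃ₗᵢ[ℝ] V)) (a : V) : Set V :=
  convexHull ℝ (orbitSet W a)

/-- A root system for `W`. -/
structure IsRootSystem (W : Subgroup (V ≃ₗᵢ[ℝ] V)) (Φ : Set V) : Prop where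
  finite : Φ.Finite
  nonempty : Φ.Nonempty
  ne_zero : ∀ α ∈ Φ, α ≠ 0
  gen : W = Subgroup.closure {s | ∃ α ∈ Φ, IsReflAlong s α}
  line : ∀ α ∈ Φ, {β ∈ Φ | ∃ t : ℝ, β = t • α} = {α, -α}
  stable : ∀ w ∈ W, (⇑w) '' Φ = Φ

/-- The positive system determined by the generic point `a`: roots `α` with `⟪a, α⟫ > 0`. -/
def posSystem (a : V) (Φ : Set V) : Set V :=
  {α ∈ Φ | 0 < ⟪a, α⟫}

/-- `Δ` is a simple system for the positive system `Φp`: `Δ ⊆ Φp` is linearly independent and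
every element of `Φp` is a linear combination of `Δ` with nonnegative coefficients. -/
def IsSimpleSystem (Φp Δ : Set V) : Prop :=
  Δ ⊆ Φp ∧ LinearIndependent ℝ ((↑) : Δ → V) ∧
    ∀ β ∈ Φp, ∃ c : V →₀ ℝ, (c.support : Set V) ⊆ Δ ∧ (∀ v : V, 0 ≤ c v) ∧
      β = c.sum fun v r => r • v

/-- The subgroup generated by the reflections along the vectors of `I`. -/
def genSubgroup (I : Set V) : Subgroup (V ≃ₗᵢ[ℝ] V) :=
  Subgroup.closure {s | ∃ β ∈ I, IsReflAlong s β}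

/-!
The elements of `W` are linear isometries, so the orbit of `a` lies on the sphere of radius `‖a‖`
about the origin. An inner product space is strictly convex, so every point of this sphere is an
extreme point of the closed ball it bounds, hence also of any smaller set that contains it, such as
the permutahedron.
-/

section ExtremePoints

theorem extremePoints_convexHull_eq_of_subset_extremePoints {𝕜 E : Type*} [Ring 𝕜]
    [LinearOrder 𝕜] [IsStrictOrderedRing 𝕜] [DenselyOrdered 𝕜] [AddCommGroup E] [Module 𝕜 E]
    [Module.IsTorsionFree 𝕜 E] {S C : Set E} (hC : Convex 𝕜 C) (hS : S ⊆ C.extremePoints 𝕜) :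
    (convexHull 𝕜 S).extremePoints 𝕜 = S := by
  have hull_subset : convexHull 𝕜 S ⊆ C := convexHull_min (hS.trans extremePoints_subset) hC
  refine extremePoints_convexHull_subset.antisymm fun x hx => ?_
  exact inter_extremePoints_subset_extremePoints_of_subset hull_subset
    ⟨subset_convexHull 𝕜 S hx, hS hx⟩

variable {E : Type*} [NormedAddCommGroup E] [NormedSpace ℝ E] [StrictConvexSpace ℝ E]

theorem sphere_subset_extremePoints_closedBall (x : E) (r : ℝ) :
    Metric.sphere x r ⊆ (Metric.closedBall x r).extremePoints ℝ := by
  obtain rfl | hr := eq_or_ne r 0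
  · simp only [Metric.sphere_zero, Metric.closedBall_zero, extremePoints_singleton, subset_rfl]
  · exact StrictConvexSpace.sphere_subset_extremePoints_closedBall x hr

theorem extremePoints_convexHull_eq_of_subset_sphere {S : Set E} {x : E} {r : ℝ}
    (hS : S ⊆ Metric.sphere x r) : (convexHull ℝ S).extremePoints ℝ = S :=
  extremePoints_convexHull_eq_of_subset_extremePoints (convex_closedBall x r)
    (hS.trans (sphere_subset_extremePoints_closedBall x r))

end ExtremePoints

theorem orbitSet_subset_sphere (W : Subgroup (V ≃ₗᵢ[ℝ] V)) (a : V) :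
    orbitSet W a ⊆ Metric.sphere 0 ‖a‖ := by
  rintro _ ⟨w, -, rfl⟩
  exact mem_sphere_zero_iff_norm.mpr (w.norm_map a)

theorem extremePoints_permutahedron_eq_orbit_general (W : Subgroup (V ≃ₗᵢ[ℝ] V)) (a : V) :
    Set.extremePoints ℝ (permutahedron W a) = orbitSet W a :=
  extremePoints_convexHull_eq_of_subset_sphere (orbitSet_subset_sphere W a)

/-- the extreme points of the permutahedron are exactly the orbit points. -/
theorem extremePoints_permutahedron_eq_orbit [FiniteDimensional ℝ V]
    (W : Subgroup (V ≃ₗᵢ[ℝ] V)) (hWfin : (W : Set (V ≃ₗᵢ[ℝ] V)).Finite)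
    (hW : IsReflectionGroup W) (a : V) (ha : IsGeneric W a) :
    Set.extremePoints ℝ (permutahedron W a) = orbitSet W a :=
  extremePoints_permutahedron_eq_orbit_general W a
end

section
/- Let W be a finite reflection group with root system Φ, let a be a generic point for W, and let Φ⁺ = {α ∈ Φ : ⟨a, α⟩ > 0}. Then there exists a unique simple system for Φ⁺, i.e. a unique subset Δ ⊆ Φ⁺ that is linearly independent over ℝ and such that every element of Φ⁺ is a linear combination of Δ with nonnegative coefficients. -/
/-!
The positive roots lie in the open half-space `⟪a, ·⟫ > 0`, and no two of them lie on the same ray.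

A finite set of vectors with these two properties has exactly one irredundant subset generating its
cone. A minimal generating subset is irredundant. For uniqueness, let `D` be irredundant and
generating, let `E` be generating, and suppose `α ∈ D` is not in `E`. Then `α` is a nonnegative
combination of elements of `E`, and one of them, not being on the ray of `α`, involves an element of
`D` other than `α`. Moving the `α`-terms to the left-hand side exhibits `α` as a nonnegative
combination of `D \ {α}`, which is impossible.

For positive roots these irredundant subsets are exactly the simple systems. If two roots `α ≠ β` of
such a subset formed an acute angle, the reflection of `β` along `α` would be a root `β - c • α`
with `c > 0`; it or its negative is positive, which makes `β` or `α` redundant. So the subset is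
pairwise obtuse and lies in an open half-space, hence it is linearly independent.
-/

open scoped RealInnerProductSpace

variable {V : Type*} [NormedAddCommGroup V] [InnerProductSpace ℝ V]

/-- A set is conically independent if it is an irredundant generating set of its cone: none of its
elements is a nonnegative combination of the others. -/
def ConicIndep (R : Type*) {M : Type*} [Semiring R] [PartialOrder R] [IsOrderedRing R]
    [AddCommMonoid M] [Module R M] (D : Set M) : Prop :=
  ∀ x ∈ D, x ∉ PointedCone.hull R (D \ {x})

/-- A conic basis of `P` is a conically independent subset of `P` generating the same cone.
Every finite set has one, and the conic bases of a positive system are its simple systems. -/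
structure IsConicBasis (R : Type*) {M : Type*} [Semiring R] [PartialOrder R] [IsOrderedRing R]
    [AddCommMonoid M] [Module R M] (P D : Set M) : Prop where
  subset : D ⊆ P
  subset_hull : P ⊆ PointedCone.hull R D
  conicIndep : ConicIndep R D

section OrderedSemiring

variable {R M : Type*} [Semiring R] [PartialOrder R] [IsOrderedRing R] [AddCommMonoid M]
  [Module R M] {D : Set M} {x : M}

theorem ConicIndep.of_linearIndepOn [Nontrivial R] (hD : LinearIndepOn R id D) :
    ConicIndep R D := fun _ hx hmem =>
  hD.notMem_span hx (by rw [Set.image_id]; exact PointedCone.hull_le_span R _ hmem)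

theorem exists_eq_smul_add_mem_hull_sdiff (hx : x ∈ D) {z : M} (hz : z ∈ PointedCone.hull R D) :
    ∃ k : R, 0 ≤ k ∧ ∃ y ∈ PointedCone.hull R (D \ {x}), z = k • x + y := by
  rw [← Set.insert_sdiff_self_of_mem hx] at hz
  obtain ⟨k, y, hy, rfl⟩ := Submodule.mem_span_insert.1 hz
  exact ⟨k, k.2, y, hy, rfl⟩

theorem exists_isConicBasis_of_finite {P : Set M} (hP : P.Finite) :
    ∃ D, IsConicBasis R P D := by
  have hfin : {D : Set M | D ⊆ P ∧ P ⊆ PointedCone.hull R D}.Finite :=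
    hP.finite_subsets.subset fun _ hD => hD.1
  obtain ⟨D, ⟨hDP, hPD⟩, hmin⟩ := hfin.exists_minimal ⟨P, subset_rfl, PointedCone.subset_hull⟩
  refine ⟨D, hDP, hPD, fun x hx hmem => ?_⟩
  have hD : D ⊆ PointedCone.hull R (D \ {x}) := fun v hv => by
    obtain rfl | hvx := eq_or_ne v x
    exacts [hmem, PointedCone.subset_hull ⟨hv, hvx⟩]
  have hle : PointedCone.hull R D ≤ PointedCone.hull R (D \ {x}) := Submodule.span_le.2 hD
  exact (hmin ⟨Set.sdiff_subset.trans hDP, hPD.trans hle⟩ Set.sdiff_subset hx).2 rfl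

theorem map_nonneg_of_mem_hull {f : M →ₗ[R] R} (hf : ∀ v ∈ D, 0 ≤ f v)
    (hx : x ∈ PointedCone.hull R D) : 0 ≤ f x :=
  (Submodule.span_le (p := (PointedCone.positive R R).comap f)).2 hf hx

end OrderedSemiring

section StrictOrderedSemiring

variable {R M : Type*} [Semiring R] [PartialOrder R] [IsStrictOrderedRing R] [AddCommMonoid M]
  [Module R M] {S : Set M} {x : M}

theorem exists_eq_smul_add_of_mem_hull (hx : x ∈ PointedCone.hull R S) (hx0 : x ≠ 0) :
    ∃ v ∈ S, ∃ c : R, 0 < c ∧ ∃ y ∈ PointedCone.hull R S, x = c • v + y := by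
  induction hx using Submodule.span_induction with
  | mem v hv => exact ⟨v, hv, 1, one_pos, 0, zero_mem _, by rw [one_smul, add_zero]⟩
  | zero => exact absurd rfl hx0
  | add x z _ hz ihx ihz =>
    obtain rfl | hx0' := eq_or_ne x 0
    · simpa only [zero_add] using ihz (by simpa only [zero_add] using hx0)
    · obtain ⟨v, hv, c, hc, y, hy, rfl⟩ := ihx hx0'
      exact ⟨v, hv, c, hc, y + z, add_mem hy hz, add_assoc _ _ _⟩
  | smul r x _ ih =>
    obtain ⟨v, hv, c, hc, y, hy, rfl⟩ := ih (right_ne_zero_of_smul hx0)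
    have hr : 0 < (r : R) := r.2.lt_of_ne' fun h => left_ne_zero_of_smul hx0 (Subtype.ext h)
    exact ⟨v, hv, r * c, mul_pos hr hc, r • y, Submodule.smul_mem _ r hy, by
      rw [smul_add, mul_smul]; rfl⟩

theorem map_pos_of_mem_hull {f : M →ₗ[R] R} (hf : ∀ v ∈ S, 0 < f v)
    (hx : x ∈ PointedCone.hull R S) (hx0 : x ≠ 0) : 0 < f x := by
  obtain ⟨v, hv, c, hc, y, hy, rfl⟩ := exists_eq_smul_add_of_mem_hull hx hx0
  rw [map_add, map_smul, smul_eq_mul]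
  exact add_pos_of_pos_of_nonneg (mul_pos hc (hf v hv))
    (map_nonneg_of_mem_hull (fun v hv => (hf v hv).le) hy)

end StrictOrderedSemiring

section Field

variable {R M : Type*} [Field R] [LinearOrder R] [IsStrictOrderedRing R] [AddCommGroup M]
  [Module R M] {P D : Set M} {f : M →ₗ[R] R} {α β : M}

theorem ConicIndep.smul_ne_add (hD : ConicIndep R D) (hf : ∀ v ∈ D, 0 < f v) (hα : α ∈ D)
    {x y : M} (hx : x ∈ PointedCone.hull R D) (hy : y ∈ PointedCone.hull R (D \ {α}))
    (hy0 : y ≠ 0) (r : R) : r • α ≠ x + y := by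
  intro h
  obtain ⟨k, -, z, hz, rfl⟩ := exists_eq_smul_add_mem_hull_sdiff hα hx
  have hf' : ∀ v ∈ D \ {α}, 0 < f v := fun v hv => hf v hv.1
  have hzy : (r - k) • α = z + y := by rw [sub_smul, h]; abel
  have hpos : 0 < (r - k) * f α := by
    rw [← smul_eq_mul, ← map_smul, hzy, map_add]
    exact add_pos_of_nonneg_of_pos (map_nonneg_of_mem_hull (fun v hv => (hf' v hv).le) hz)
      (map_pos_of_mem_hull hf' hy hy0)
  have hrk : 0 < r - k := pos_of_mul_pos_left hpos (hf α hα).le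
  exact hD α hα <| (PointedCone.smul_mem_iff _ hrk).1 (hzy ▸ add_mem hz hy)

theorem ConicIndep.nonpos_of_sub_smul_mem_hull (hD : ConicIndep R D) (hf : ∀ v ∈ D, 0 < f v)
    (hα : α ∈ D) (hβ : β ∈ D) (hne : α ≠ β) {c : R}
    (h : β - c • α ∈ PointedCone.hull R D ∨ -(β - c • α) ∈ PointedCone.hull R D) : c ≤ 0 := by
  by_contra! hc
  have ne_zero : ∀ v ∈ D, v ≠ 0 := fun v hv hv0 => (hf v hv).ne' (hv0 ▸ map_zero f)
  have hα' : c • α ∈ PointedCone.hull R (D \ {β}) :=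
    PointedCone.smul_mem _ hc.le (PointedCone.subset_hull ⟨hα, hne⟩)
  have hβ' : β ∈ PointedCone.hull R (D \ {α}) := PointedCone.subset_hull ⟨hβ, hne.symm⟩
  rcases h with h | h
  · exact hD.smul_ne_add hf hβ h hα' (smul_ne_zero hc.ne' (ne_zero α hα)) 1 (by module)
  · exact hD.smul_ne_add hf hα h hβ' (ne_zero β hβ) c (by module)

theorem IsConicBasis.subset_of_subset_hull (hD : IsConicBasis R P D) (hf : ∀ v ∈ P, 0 < f v)
    (hP : P.Pairwise fun v w => ¬ SameRay R v w) {E : Set M} (hEP : E ⊆ P)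
    (hE : P ⊆ PointedCone.hull R E) : D ⊆ E := by
  intro α hα
  by_contra hαE
  have hαP : α ∈ P := hD.subset hα
  have hα0 : α ≠ 0 := fun h => (hf α hαP).ne' (h ▸ map_zero f)
  obtain ⟨β, hβ, c, hc, y, hy, hαβ⟩ := exists_eq_smul_add_of_mem_hull (hE hαP) hα0
  have hy' : y ∈ PointedCone.hull R D := Submodule.span_le.2 (hEP.trans hD.subset_hull) hy
  obtain ⟨k, hk, z, hz, hβz⟩ :=
    exists_eq_smul_add_mem_hull_sdiff hα (hD.subset_hull (hEP hβ))
  have hz0 : z ≠ 0 := by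
    rintro rfl
    refine hP hαP (hEP hβ) (ne_of_mem_of_not_mem hβ hαE).symm ?_
    rw [hβz, add_zero]
    exact SameRay.sameRay_nonneg_smul_right α hk
  refine hD.conicIndep.smul_ne_add (fun v hv => hf v (hD.subset hv)) hα hy'
    (PointedCone.smul_mem _ hc.le hz) (smul_ne_zero hc.ne' hz0) (1 - c * k) ?_
  calc (1 - c * k) • α = α - c • k • α := by module
    _ = c • (k • α + z) + y - c • k • α := by rw [← hβz, ← hαβ]
    _ = y + c • z := by module

theorem existsUnique_isConicBasis (hfin : P.Finite) (hf : ∀ v ∈ P, 0 < f v)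
    (hP : P.Pairwise fun v w => ¬ SameRay R v w) : ∃! D, IsConicBasis R P D := by
  obtain ⟨D, hD⟩ := exists_isConicBasis_of_finite (R := R) hfin
  exact ⟨D, hD, fun E hE => (hE.subset_of_subset_hull hf hP hD.subset hD.subset_hull).antisymm
    (hD.subset_of_subset_hull hf hP hE.subset hE.subset_hull)⟩

end Field

theorem exists_isReflAlong {α : V} (hα : α ≠ 0) : ∃ s : V ≃ₗᵢ[ℝ] V, IsReflAlong s α := by
  refine ⟨(ℝ ∙ α)ᗮ.reflection, hα, fun v => ?_⟩
  rw [Submodule.reflection_orthogonal_apply, Submodule.reflection_singleton_apply,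
    real_inner_self_eq_norm_sq, real_inner_comm, RCLike.ofReal_real_eq_id, id_eq]
  module

theorem isSimpleSystem_iff_subset_hull {P Δ : Set V} : IsSimpleSystem P Δ ↔
    Δ ⊆ P ∧ LinearIndepOn ℝ id Δ ∧ P ⊆ PointedCone.hull ℝ Δ := by
  simp only [IsSimpleSystem, LinearIndepOn, Set.subset_def (s := P), SetLike.mem_coe,
    PointedCone.mem_hull_set, eq_comm, id]

namespace IsRootSystem

variable {W : Subgroup (V ≃ₗᵢ[ℝ] V)} {Φ Δ : Set V} {a α β : V}

theorem mem_of_isReflAlong (hΦ : IsRootSystem W Φ) (hα : α ∈ Φ) {s : V ≃ₗᵢ[ℝ] V}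
    (hs : IsReflAlong s α) : s ∈ W := by
  rw [hΦ.gen]
  exact Subgroup.subset_closure ⟨α, hα, hs⟩

theorem sub_smul_mem (hΦ : IsRootSystem W Φ) (hα : α ∈ Φ) (hβ : β ∈ Φ) :
    β - (2 * ⟪β, α⟫ / ⟪α, α⟫) • α ∈ Φ := by
  obtain ⟨s, hs⟩ := exists_isReflAlong (hΦ.ne_zero α hα)
  rw [← hs.2 β, ← hΦ.stable s (hΦ.mem_of_isReflAlong hα hs)]
  exact Set.mem_image_of_mem s hβ

theorem neg_mem (hΦ : IsRootSystem W Φ) (hα : α ∈ Φ) : -α ∈ Φ := by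
  have hline : -α ∈ {β ∈ Φ | ∃ t : ℝ, β = t • α} := hΦ.line α hα ▸ Or.inr rfl
  exact hline.1

theorem inner_ne_zero (hΦ : IsRootSystem W Φ) (ha : IsGeneric W a) (hα : α ∈ Φ) :
    ⟪a, α⟫ ≠ 0 := by
  intro h
  obtain ⟨s, hs⟩ := exists_isReflAlong (hΦ.ne_zero α hα)
  refine ha s (hΦ.mem_of_isReflAlong hα hs) ⟨α, hs⟩ ?_
  rw [hs.2, h, mul_zero, zero_div, zero_smul, sub_zero]

theorem mem_posSystem_or_neg_mem (hΦ : IsRootSystem W Φ) (ha : IsGeneric W a) (hα : α ∈ Φ) :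
    α ∈ posSystem a Φ ∨ -α ∈ posSystem a Φ := by
  rcases (hΦ.inner_ne_zero ha hα).lt_or_gt with h | h
  · exact Or.inr ⟨hΦ.neg_mem hα, by rwa [inner_neg_right, neg_pos]⟩
  · exact Or.inl ⟨hα, h⟩

theorem pairwise_not_sameRay (hΦ : IsRootSystem W Φ) :
    Φ.Pairwise fun α β => ¬ SameRay ℝ α β := by
  intro α hα β hβ hne hray
  obtain ⟨t, -, rfl⟩ := hray.exists_pos_left (hΦ.ne_zero α hα) (hΦ.ne_zero β hβ)
  have hline : t • α ∈ ({α, -α} : Set V) := hΦ.line α hα ▸ ⟨hβ, t, rfl⟩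
  rcases hline with h | h
  · exact hne h.symm
  · rw [Set.mem_singleton_iff.1 h] at hray
    exact hΦ.ne_zero α hα (eq_zero_of_sameRay_self_neg hray)

theorem inner_nonpos_of_isConicBasis (hΦ : IsRootSystem W Φ) (ha : IsGeneric W a)
    (hΔ : IsConicBasis ℝ (posSystem a Φ) Δ) (hα : α ∈ Δ) (hβ : β ∈ Δ) (hne : α ≠ β) :
    ⟪α, β⟫ ≤ 0 := by
  have hαΦ : α ∈ Φ := (hΔ.subset hα).1
  have hroot : β - (2 * ⟪β, α⟫ / ⟪α, α⟫) • α ∈ Φ := hΦ.sub_smul_mem hαΦ (hΔ.subset hβ).1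
  have hcoeff : 2 * ⟪β, α⟫ / ⟪α, α⟫ ≤ 0 :=
    hΔ.conicIndep.nonpos_of_sub_smul_mem_hull (f := innerₗ V a) (fun v hv => (hΔ.subset hv).2)
      hα hβ hne ((hΦ.mem_posSystem_or_neg_mem ha hroot).imp (hΔ.subset_hull ·) (hΔ.subset_hull ·))
  have hαα : 0 < ⟪α, α⟫ := real_inner_self_pos.2 (hΦ.ne_zero α hαΦ)
  rw [div_le_iff₀ hαα, zero_mul, real_inner_comm] at hcoeff
  linarith

theorem isSimpleSystem_iff_isConicBasis (hΦ : IsRootSystem W Φ) (ha : IsGeneric W a) :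
    IsSimpleSystem (posSystem a Φ) Δ ↔ IsConicBasis ℝ (posSystem a Φ) Δ := by
  rw [isSimpleSystem_iff_subset_hull]
  refine ⟨fun ⟨hsub, hli, hgen⟩ => ⟨hsub, hgen, .of_linearIndepOn hli⟩, fun hΔ =>
    ⟨hΔ.subset, ?_, hΔ.subset_hull⟩⟩
  exact LinearMap.BilinForm.linearIndependent_of_pairwise_le_zero (innerₗ V)
    (fun _ => real_inner_self_pos.2) (innerₗ V a) _ (fun α => (hΔ.subset α.2).2)
    fun α β hne => hΦ.inner_nonpos_of_isConicBasis ha hΔ α.2 β.2 (Subtype.coe_ne_coe.2 hne)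

end IsRootSystem

theorem existsUnique_simpleSystem_general (W : Subgroup (V ≃ₗᵢ[ℝ] V)) (Φ : Set V)
    (hΦ : IsRootSystem W Φ) (a : V) (ha : IsGeneric W a) :
    ∃! Δ : Set V, IsSimpleSystem (posSystem a Φ) Δ := by
  have hpos : posSystem a Φ ⊆ Φ := Set.sep_subset _ _
  simp only [hΦ.isSimpleSystem_iff_isConicBasis ha]
  exact existsUnique_isConicBasis (f := innerₗ V a) (hΦ.finite.subset hpos) (fun _ hα => hα.2)
    (hΦ.pairwise_not_sameRay.mono hpos)

/-- there is a unique simple system for the positive system `Φ⁺`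
determined by a generic point. -/
theorem existsUnique_simpleSystem [FiniteDimensional ℝ V]
    (W : Subgroup (V ≃ₗᵢ[ℝ] V)) (hWfin : (W : Set (V ≃ₗᵢ[ℝ] V)).Finite)
    (Φ : Set V) (hΦ : IsRootSystem W Φ) (a : V) (ha : IsGeneric W a) :
    ∃! Δ : Set V, IsSimpleSystem (posSystem a Φ) Δ :=
  existsUnique_simpleSystem_general W Φ hΦ a ha
end

section
/- Let W be a finite reflection group with root system Φ, a a generic point, Φ⁺ = {α ∈ Φ : ⟨a,α⟩ > 0}, and Δ a simple system for Φ⁺. Then for any two distinct simple roots α, β ∈ Δ, the inner product satisfies ⟨α, β⟩ ≤ 0. -/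
/-!
If `⟪α, β⟫ > 0`, then the reflected root `s_α β = β - k • α` has `k > 0`, so its coordinates in
the linearly independent set `Δ` have both signs. But a root that is not orthogonal to `a` is
positive or the negative of a positive root, so its coordinates all have the same sign.
-/

open scoped RealInnerProductSpace

variable {V : Type*} [NormedAddCommGroup V] [InnerProductSpace ℝ V]

lemma reflection_orthogonal_span_singleton_apply (α v : V) :
    (ℝ ∙ α)ᗮ.reflection v = v - (2 * ⟪v, α⟫ / ⟪α, α⟫) • α := by
  rw [Submodule.reflection_orthogonal_apply, Submodule.reflection_singleton_apply,
    RCLike.ofReal_real_eq_id, id_eq, ← real_inner_self_eq_norm_sq, real_inner_comm]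
  module

lemma isReflAlong_reflection {α : V} (hα : α ≠ 0) : IsReflAlong (ℝ ∙ α)ᗮ.reflection α :=
  ⟨hα, reflection_orthogonal_span_singleton_apply α⟩

section RootSystem

variable {W : Subgroup (V ≃ₗᵢ[ℝ] V)} {Φ : Set V} {a α β : V}

lemma IsRootSystem.reflection_mem (hΦ : IsRootSystem W Φ) (hα : α ∈ Φ) :
    (ℝ ∙ α)ᗮ.reflection ∈ W := by
  rw [hΦ.gen]
  exact Subgroup.subset_closure ⟨α, hα, isReflAlong_reflection (hΦ.ne_zero α hα)⟩

lemma IsRootSystem.reflection_apply_mem (hΦ : IsRootSystem W Φ) (hα : α ∈ Φ) (hβ : β ∈ Φ) :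
    (ℝ ∙ α)ᗮ.reflection β ∈ Φ :=
  (hΦ.stable _ (hΦ.reflection_mem hα)).subset (Set.mem_image_of_mem _ hβ)

lemma IsGeneric.inner_ne_zero (ha : IsGeneric W a) (hΦ : IsRootSystem W Φ) (hα : α ∈ Φ) :
    ⟪a, α⟫ ≠ 0 := fun horth ↦
  ha _ (hΦ.reflection_mem hα) ⟨α, isReflAlong_reflection (hΦ.ne_zero α hα)⟩ <|
    Submodule.reflection_mem_subspace_eq_self
      (Submodule.mem_orthogonal_singleton_iff_inner_left.2 horth)

end RootSystem

lemma mem_posSystem_or_neg_mem {Φ : Set V} {a γ : V} (hγ : γ ∈ Φ) (hneg : -γ ∈ Φ)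
    (ha : ⟪a, γ⟫ ≠ 0) : γ ∈ posSystem a Φ ∨ -γ ∈ posSystem a Φ :=
  ha.lt_or_gt.symm.imp (fun hpos ↦ ⟨hγ, hpos⟩)
    fun hlt ↦ ⟨hneg, by rwa [inner_neg_right, neg_pos]⟩

namespace IsSimpleSystem

variable {Φp Δ : Set V} {α β : V}

lemma nonneg_of_linearCombination_mem (hΔ : IsSimpleSystem Φp Δ) {d : V →₀ ℝ}
    (hd : d ∈ Finsupp.supported ℝ ℝ Δ) (hmem : Finsupp.linearCombination ℝ id d ∈ Φp) :
    0 ≤ d := by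
  obtain ⟨-, hindep, hcone⟩ := hΔ
  obtain ⟨c, hcΔ, hc, hdc⟩ := hcone _ hmem
  have hind : LinearIndepOn ℝ id Δ := hindep
  have heq : d = c := linearIndepOn_iffₛ.1 hind d hd c hcΔ hdc
  exact heq ▸ hc

lemma coeff_nonneg (hΔ : IsSimpleSystem Φp Δ) (hα : α ∈ Δ) (hβ : β ∈ Δ) (hαβ : α ≠ β)
    {x y : ℝ} (hmem : x • α + y • β ∈ Φp) : 0 ≤ x ∧ 0 ≤ y := by
  have hnonneg : 0 ≤ Finsupp.single α x + Finsupp.single β y := by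
    refine hΔ.nonneg_of_linearCombination_mem (add_mem (Finsupp.single_mem_supported ℝ x hα)
      (Finsupp.single_mem_supported ℝ y hβ)) ?_
    simpa only [map_add, Finsupp.linearCombination_single, id_eq] using hmem
  exact ⟨by simpa [hαβ] using hnonneg α, by simpa [hαβ.symm] using hnonneg β⟩

lemma inner_nonpos (hΔ : IsSimpleSystem Φp Δ) (hα : α ∈ Δ) (hβ : β ∈ Δ) (hαβ : α ≠ β)
    (hmem : (ℝ ∙ α)ᗮ.reflection β ∈ Φp ∨ -(ℝ ∙ α)ᗮ.reflection β ∈ Φp) : ⟪α, β⟫ ≤ 0 := by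
  by_contra! hpos
  have hα₀ : α ≠ 0 := by
    rintro rfl
    simp at hpos
  have hk : 0 < 2 * ⟪β, α⟫ / ⟪α, α⟫ := by
    rw [real_inner_comm]
    exact div_pos (mul_pos two_pos hpos) (real_inner_self_pos.2 hα₀)
  rw [reflection_orthogonal_span_singleton_apply] at hmem
  set k := 2 * ⟪β, α⟫ / ⟪α, α⟫
  rcases hmem with hmem | hmem
  · have hcomb : β - k • α = (-k) • α + (1 : ℝ) • β := by module
    linarith [(hΔ.coeff_nonneg hα hβ hαβ (hcomb ▸ hmem)).1]
  · have hcomb : -(β - k • α) = k • α + (-1 : ℝ) • β := by module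
    linarith [(hΔ.coeff_nonneg hα hβ hαβ (hcomb ▸ hmem)).2]

end IsSimpleSystem

theorem inner_nonpos_of_mem_simpleSystem_general {Φ : Set V}
    (hΦ : ∀ α ∈ Φ, ∀ β ∈ Φ, (ℝ ∙ α)ᗮ.reflection β ∈ Φ) {a : V} (ha : ∀ α ∈ Φ, ⟪a, α⟫ ≠ 0)
    {Δ : Set V} (hΔ : IsSimpleSystem (posSystem a Φ) Δ)
    {α β : V} (hα : α ∈ Δ) (hβ : β ∈ Δ) (hαβ : α ≠ β) :
    ⟪α, β⟫ ≤ 0 := by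
  have hγ : (ℝ ∙ α)ᗮ.reflection β ∈ Φ := hΦ α (hΔ.1 hα).1 β (hΔ.1 hβ).1
  have hneg : -(ℝ ∙ α)ᗮ.reflection β ∈ Φ := by
    simpa only [Submodule.reflection_orthogonalComplement_singleton_eq_neg] using hΦ _ hγ _ hγ
  exact hΔ.inner_nonpos hα hβ hαβ (mem_posSystem_or_neg_mem hγ hneg (ha _ hγ))

/-- two distinct simple roots have nonpositive inner product. -/
theorem inner_nonpos_of_mem_simpleSystem [FiniteDimensional ℝ V]
    (W : Subgroup (V ≃ₗᵢ[ℝ] V)) (hWfin : (W : Set (V ≃ₗᵢ[ℝ] V)).Finite)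
    (Φ : Set V) (hΦ : IsRootSystem W Φ) (a : V) (ha : IsGeneric W a)
    (Δ : Set V) (hΔ : IsSimpleSystem (posSystem a Φ) Δ)
    {α β : V} (hα : α ∈ Δ) (hβ : β ∈ Δ) (hαβ : α ≠ β) :
    ⟪α, β⟫ ≤ 0 := by
  exact inner_nonpos_of_mem_simpleSystem_general (fun _ hα _ hβ ↦ hΦ.reflection_apply_mem hα hβ)
    (fun _ hα ↦ ha.inner_ne_zero hΦ hα) hΔ hα hβ hαβ
end

section
/- Let W be a finite reflection group with root system Φ, a a generic point, Φ⁺ = {α ∈ Φ : ⟨a,α⟩ > 0}, and Δ a simple system for Φ⁺. For I ⊆ Δ let W_I be the subgroup of W generated by {s_α : α ∈ I} and F_I = conv{u(a) : u ∈ W_I}. Then for all w, g ∈ W and I ⊆ Δ: w(F_I) = g(F_I) if and only if w⁻¹g ∈ W_I (equivalently, wW_I = gW_I). -/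
/-!
The orbit of `a` under a group of isometries lies on a sphere, whose points are extreme in the ball
it bounds. So if `u = w⁻¹ g` maps `conv (G a)` onto itself, where `G ≤ W`, then `u a` is a point of
the sphere in the convex hull of `G a` and therefore equals `v a` for some `v ∈ G`. Hence `u = v`,
because the stabilizer of a generic point in a finite reflection group is trivial.

To see the latter, call a positive root simple if its reflection permutes the other positive roots.
A vector with positive inner product against some positive root has one against some simple root;
reducing roots by height `⟪a, ·⟫` then shows that simple reflections generate `W`. An element of `W`
fixing `a` keeps all positive roots positive, so the exchange property shortens any nonempty word in
simple reflections that represents it by two letters, and it is the identity.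
-/

open scoped RealInnerProductSpace

variable {V : Type*} [NormedAddCommGroup V] [InnerProductSpace ℝ V]

open scoped Pointwise

lemma exists_mem_pow_of_mem_closure {G : Type*} [Group G] {T : Set G} (hT : T⁻¹ = T) {x : G}
    (hx : x ∈ Subgroup.closure T) : ∃ n : ℕ, x ∈ T ^ n := by
  induction hx using Subgroup.closure_induction with
  | mem x hx => exact ⟨1, by rwa [pow_one]⟩
  | one => exact ⟨0, by rw [pow_zero]; rfl⟩
  | mul x y _ _ hx hy =>
    obtain ⟨m, hm⟩ := hx
    obtain ⟨n, hn⟩ := hy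
    exact ⟨m + n, pow_add T m n ▸ Set.mul_mem_mul hm hn⟩
  | inv x _ hx =>
    obtain ⟨n, hn⟩ := hx
    exact ⟨n, by rwa [← hT, inv_pow, Set.inv_mem_inv]⟩

/-! ### Reflections -/

/-- The orthogonal reflection in the hyperplane `αᗮ`, which is the only isometry satisfying
`IsReflAlong · α` when `α ≠ 0`. For `α = 0` it is the identity. -/
noncomputable def reflAlong (α : V) : V ≃ₗᵢ[ℝ] V := (ℝ ∙ α)ᗮ.reflection

lemma reflAlong_apply (α v : V) : reflAlong α v = v - (2 * ⟪v, α⟫ / ⟪α, α⟫) • α := by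
  rw [reflAlong, Submodule.reflection_orthogonal_apply, Submodule.reflection_singleton_apply,
    real_inner_self_eq_norm_sq, real_inner_comm, two_nsmul, neg_sub, ← add_smul,
    RCLike.ofReal_real_eq_id, id_eq]
  ring_nf

lemma reflAlong_apply_of_norm_eq_one {α : V} (hα : ‖α‖ = 1) (v : V) :
    reflAlong α v = v - (2 * ⟪v, α⟫) • α := by
  rw [reflAlong_apply, inner_self_eq_one_of_norm_eq_one hα, div_one]

lemma reflAlong_self (α : V) : reflAlong α α = -α :=
  Submodule.reflection_orthogonalComplement_singleton_eq_neg α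

lemma reflAlong_mul_self (α : V) : reflAlong α * reflAlong α = 1 :=
  Submodule.reflection_mul_reflection _

lemma reflAlong_inv (α : V) : (reflAlong α)⁻¹ = reflAlong α :=
  Submodule.reflection_inv

lemma reflAlong_smul {c : ℝ} (hc : c ≠ 0) (α : V) : reflAlong (c • α) = reflAlong α := by
  simp only [reflAlong, Submodule.span_singleton_smul_eq hc.isUnit]

lemma reflAlong_map (x : V ≃ₗᵢ[ℝ] V) (α : V) : reflAlong (x α) = x * reflAlong α * x⁻¹ := by
  ext v
  have hinner : ⟪v, x α⟫ = ⟪x.symm v, α⟫ := by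
    rw [← x.inner_map_map (x.symm v), x.apply_symm_apply]
  simp [reflAlong_apply, hinner]

lemma isReflAlong_iff_eq_reflAlong {s : V ≃ₗᵢ[ℝ] V} {α : V} :
    IsReflAlong s α ↔ α ≠ 0 ∧ s = reflAlong α := by
  simp only [IsReflAlong, LinearIsometryEquiv.ext_iff, reflAlong_apply]

lemma isReflection_reflAlong {α : V} (hα : α ≠ 0) : IsReflection (reflAlong α) :=
  ⟨α, isReflAlong_iff_eq_reflAlong.2 ⟨hα, rfl⟩⟩

lemma IsReflection.exists_unit_normal_inner_pos {s : V ≃ₗᵢ[ℝ] V} (hs : IsReflection s) {a : V}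
    (ha : s a ≠ a) : ∃ α : V, ‖α‖ = 1 ∧ reflAlong α = s ∧ 0 < ⟪a, α⟫ := by
  obtain ⟨β, hβ⟩ := hs
  obtain ⟨hβ0, rfl⟩ := isReflAlong_iff_eq_reflAlong.1 hβ
  have haβ : ⟪a, β⟫ ≠ 0 := fun h => ha (by simp [reflAlong_apply, h])
  have hγ : ⟪a, β⟫ • β ≠ 0 := smul_ne_zero haβ hβ0
  refine ⟨‖⟪a, β⟫ • β‖⁻¹ • ⟪a, β⟫ • β, norm_smul_inv_norm hγ, ?_, ?_⟩
  · rw [reflAlong_smul (inv_ne_zero (norm_ne_zero_iff.2 hγ)), reflAlong_smul haβ]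
  · rw [real_inner_smul_right, real_inner_smul_right]
    exact mul_pos (inv_pos.2 (norm_pos_iff.2 hγ)) (mul_self_pos.2 haβ)

lemma eq_of_reflAlong_eq {a α β : V} (hα : ‖α‖ = 1) (hβ : ‖β‖ = 1) (haα : 0 < ⟪a, α⟫)
    (haβ : 0 < ⟪a, β⟫) (h : reflAlong α = reflAlong β) : α = β := by
  have hαβ : α = ⟪α, β⟫ • β := by
    have hneg := reflAlong_self α
    rw [h, reflAlong_apply_of_norm_eq_one hβ, mul_smul, two_smul] at hneg
    linear_combination (norm := module) (1 / 2 : ℝ) • hneg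
  have habs : |⟪α, β⟫| = 1 := by
    simpa [norm_smul, hα, hβ] using (congrArg norm hαβ).symm
  have hpos : 0 < ⟪α, β⟫ := by
    rw [hαβ, real_inner_smul_right] at haα
    exact pos_of_mul_pos_left haα haβ.le
  rw [hαβ, ← abs_of_pos hpos, habs, one_smul]

/-! ### Unit roots -/

/-- The unit normals of the reflections belonging to `W`: the normalized root system of `W`. It is
attached to `W` alone, and its elements are determined up to sign by their reflections. -/
def unitRoots (W : Subgroup (V ≃ₗᵢ[ℝ] V)) : Set V := {α | ‖α‖ = 1 ∧ reflAlong α ∈ W}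

/-- The unit roots of `W` that are positive with respect to `a`. For generic `a` they contain
exactly one of each pair of opposite unit roots. -/
abbrev posUnitRoots (W : Subgroup (V ≃ₗᵢ[ℝ] V)) (a : V) : Set V := posSystem a (unitRoots W)

lemma neg_notMem_posSystem {a α : V} {Φ : Set V} (hα : α ∈ posSystem a Φ) :
    -α ∉ posSystem a Φ := fun hneg => by
  have := hneg.2
  rw [inner_neg_right] at this
  linarith [hα.2]

section ReflectionGroup

variable {W : Subgroup (V ≃ₗᵢ[ℝ] V)} {a : V}

lemma map_mem_unitRoots {x : V ≃ₗᵢ[ℝ] V} (hx : x ∈ W) {α : V} (hα : α ∈ unitRoots W) :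
    x α ∈ unitRoots W := by
  refine ⟨(x.norm_map α).trans hα.1, ?_⟩
  rw [reflAlong_map]
  exact mul_mem (mul_mem hx hα.2) (inv_mem hx)

lemma neg_mem_unitRoots {α : V} (hα : α ∈ unitRoots W) : -α ∈ unitRoots W :=
  reflAlong_self α ▸ map_mem_unitRoots hα.2 hα

lemma IsGeneric.mem_or_neg_mem_posUnitRoots (ha : IsGeneric W a) {α : V} (hα : α ∈ unitRoots W) :
    α ∈ posUnitRoots W a ∨ -α ∈ posUnitRoots W a := by
  have hα0 : α ≠ 0 := norm_ne_zero_iff.1 (hα.1 ▸ one_ne_zero)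
  have hne : ⟪a, α⟫ ≠ 0 := fun h =>
    ha _ hα.2 (isReflection_reflAlong hα0) (by simp [reflAlong_apply, h])
  rcases hne.lt_or_gt with hneg | hpos
  · exact .inr ⟨neg_mem_unitRoots hα, by rwa [inner_neg_right, neg_pos]⟩
  · exact .inl ⟨hα, hpos⟩

lemma finite_posUnitRoots (hWfin : (W : Set (V ≃ₗᵢ[ℝ] V)).Finite) (a : V) :
    (posUnitRoots W a).Finite :=
  Set.Finite.of_injOn (f := reflAlong) (fun _ hα => hα.1.2)
    (fun _ hα _ hβ => eq_of_reflAlong_eq hα.1.1 hβ.1.1 hα.2 hβ.2) hWfin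

/-! ### Simple roots -/

/-- The simple roots of `W` with respect to `a`, normalized to length one. They are encoded by
the property that drives the exchange argument: the reflection along `α` permutes the positive
unit roots other than `α`. -/
def simpleRoots (W : Subgroup (V ≃ₗᵢ[ℝ] V)) (a : V) : Set V :=
  {α ∈ posUnitRoots W a | ∀ β ∈ posUnitRoots W a, β ≠ α → reflAlong α β ∈ posUnitRoots W a}

/-- The reflections along the simple roots. A product of `n` of them is an element of the pointwise
power `simpleReflections W a ^ n`; no inverses are needed since reflections are involutions. -/
def simpleReflections (W : Subgroup (V ≃ₗᵢ[ℝ] V)) (a : V) : Set (V ≃ₗᵢ[ℝ] V) :=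
  reflAlong '' simpleRoots W a

lemma simpleReflections_subset : simpleReflections W a ⊆ W := by
  rintro _ ⟨α, hα, rfl⟩
  exact hα.1.1.2

lemma inv_simpleReflections : (simpleReflections W a)⁻¹ = simpleReflections W a := by
  simp only [simpleReflections, ← Set.image_inv_eq_inv, Set.image_image, reflAlong_inv]

/-- If `s_γ β` is negative, then `β` and `-s_γ β` are positive roots with sum `2⟪β, γ⟫ γ`. As `b`
vanishes on `γ`, it vanishes on both, so both have height at least that of `γ`. Hence
`2⟪β, γ⟫ ≥ 2`, which for unit vectors means `β = γ`. -/
lemma mem_simpleRoots_of_minimal (ha : IsGeneric W a) {b γ : V}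
    (hb : ∀ β ∈ posUnitRoots W a, 0 ≤ ⟪b, β⟫) (hγ : γ ∈ posUnitRoots W a) (hbγ : ⟪b, γ⟫ = 0)
    (hmin : ∀ β ∈ posUnitRoots W a, ⟪b, β⟫ = 0 → ⟪a, γ⟫ ≤ ⟪a, β⟫) : γ ∈ simpleRoots W a := by
  refine ⟨hγ, fun β hβ hne => ?_⟩
  refine (ha.mem_or_neg_mem_posUnitRoots (map_mem_unitRoots hγ.1.2 hβ.1)).resolve_right
    fun hδ => hne ?_
  have hsum (v : V) : ⟪v, β⟫ + ⟪v, -reflAlong γ β⟫ = 2 * ⟪β, γ⟫ * ⟪v, γ⟫ := by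
    rw [← inner_add_right, reflAlong_apply_of_norm_eq_one hγ.1.1, neg_sub, add_sub_cancel,
      real_inner_smul_right]
  have hbsum := hsum b
  rw [hbγ, mul_zero] at hbsum
  have hbβ : ⟪b, β⟫ = 0 := by linarith [hb _ hβ, hb _ hδ]
  have hbδ : ⟪b, -reflAlong γ β⟫ = 0 := by linarith
  have hheight : 2 * ⟪a, γ⟫ ≤ 2 * ⟪β, γ⟫ * ⟪a, γ⟫ := by
    linarith [hsum a, hmin _ hβ hbβ, hmin _ hδ hbδ]
  have hone : 1 ≤ ⟪β, γ⟫ := by linarith [le_of_mul_le_mul_right hheight hγ.2]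
  exact (inner_eq_one_iff_of_norm_eq_one hβ.1.1 hγ.1.1).1
    ((real_inner_le_one_of_norm_eq_one hβ.1.1 hγ.1.1).antisymm hone)

lemma exists_mem_simpleRoots_inner_pos (hWfin : (W : Set (V ≃ₗᵢ[ℝ] V)).Finite) (ha : IsGeneric W a)
    {b β : V} (hβ : β ∈ posUnitRoots W a) (hbβ : 0 < ⟪b, β⟫) :
    ∃ α ∈ simpleRoots W a, 0 < ⟪b, α⟫ := by
  -- The segment from `a` to `-b` first meets a root hyperplane where the ratio `⟪b, α⟫ / ⟪a, α⟫`
  -- is maximal; the root of least height `⟪a, α⟫` attaining the maximum is simple.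
  have hfin := finite_posUnitRoots hWfin a
  obtain ⟨δ, hδ, hmax⟩ := Set.exists_max_image _ (fun α => ⟪b, α⟫ / ⟪a, α⟫) hfin ⟨β, hβ⟩
  set c := ⟪b, δ⟫ / ⟪a, δ⟫
  have hc : 0 < c := (div_pos hbβ hβ.2).trans_le (hmax β hβ)
  have hinner (v : V) : ⟪c • a - b, v⟫ = c * ⟪a, v⟫ - ⟪b, v⟫ := by
    rw [inner_sub_left, real_inner_smul_left]
  have hnonneg : ∀ α ∈ posUnitRoots W a, 0 ≤ ⟪c • a - b, α⟫ := fun α hα => by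
    rw [hinner, sub_nonneg]
    exact (div_le_iff₀ hα.2).1 (hmax α hα)
  have hδ0 : ⟪c • a - b, δ⟫ = 0 := by rw [hinner, div_mul_cancel₀ _ hδ.2.ne', sub_self]
  obtain ⟨γ, ⟨hγ, hγ0⟩, hmin⟩ := Set.exists_min_image
    {α ∈ posUnitRoots W a | ⟪c • a - b, α⟫ = 0} (fun α => ⟪a, α⟫) (hfin.sep _) ⟨δ, hδ, hδ0⟩
  refine ⟨γ, mem_simpleRoots_of_minimal ha hnonneg hγ hγ0 fun α hα hα0 => hmin α ⟨hα, hα0⟩, ?_⟩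
  rw [hinner] at hγ0
  linarith [mul_pos hc hγ.2]

lemma reflAlong_mem_closure_simpleReflections (hWfin : (W : Set (V ≃ₗᵢ[ℝ] V)).Finite)
    (ha : IsGeneric W a) {β : V} (hβ : β ∈ posUnitRoots W a) :
    reflAlong β ∈ Subgroup.closure (simpleReflections W a) := by
  by_contra hβS
  -- A counterexample of minimal height is lowered further by a suitable simple reflection.
  obtain ⟨γ, ⟨hγ, hγS⟩, hmin⟩ := Set.exists_min_image
    {γ ∈ posUnitRoots W a | reflAlong γ ∉ Subgroup.closure (simpleReflections W a)}
    (fun γ => ⟪a, γ⟫) ((finite_posUnitRoots hWfin a).sep _) ⟨β, hβ, hβS⟩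
  obtain ⟨α, hα, hγα⟩ := exists_mem_simpleRoots_inner_pos hWfin ha hγ
    (real_inner_self_pos.2 (norm_ne_zero_iff.1 (hγ.1.1 ▸ one_ne_zero)))
  have hαS : reflAlong α ∈ Subgroup.closure (simpleReflections W a) :=
    Subgroup.subset_closure ⟨α, hα, rfl⟩
  have hne : γ ≠ α := fun h => hγS (h ▸ hαS)
  have hlow : ⟪a, reflAlong α γ⟫ < ⟪a, γ⟫ := by
    rw [reflAlong_apply_of_norm_eq_one hα.1.1.1, inner_sub_right, real_inner_smul_right]
    linarith [mul_pos hγα hα.1.2]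
  refine hlow.not_ge (hmin _ ⟨hα.2 γ hγ hne, fun hmem => hγS ?_⟩)
  rwa [reflAlong_map, Subgroup.mul_mem_cancel_right _ (inv_mem hαS),
    Subgroup.mul_mem_cancel_left _ hαS] at hmem

lemma IsReflectionGroup.le_closure_simpleReflections (hW : IsReflectionGroup W)
    (hWfin : (W : Set (V ≃ₗᵢ[ℝ] V)).Finite) (ha : IsGeneric W a) :
    W ≤ Subgroup.closure (simpleReflections W a) := by
  refine (le_of_eq hW).trans ((Subgroup.closure_le _).2 ?_)
  rintro s ⟨hs, hsW⟩
  obtain ⟨α, hα, rfl, haα⟩ := hs.exists_unit_normal_inner_pos (ha s hsW hs)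
  exact reflAlong_mem_closure_simpleReflections hWfin ha ⟨⟨hα, hsW⟩, haα⟩

/-! ### The stabilizer of a generic point -/

/-- The letter to delete is the one at which the image of `α` changes sign: there the image is
itself a simple root `β = y α`, and `s_β y s_α = y`. -/
lemma IsGeneric.exchange (ha : IsGeneric W a) {α : V} (hα : α ∈ simpleRoots W a) {n : ℕ}
    {x : V ≃ₗᵢ[ℝ] V} (hx : x ∈ simpleReflections W a ^ n) (hxα : -(x α) ∈ posUnitRoots W a) :
    ∃ m, n = m + 1 ∧ x * reflAlong α ∈ simpleReflections W a ^ m := by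
  induction n generalizing x with
  | zero =>
    obtain rfl : x = 1 := by simpa using hx
    exact absurd hxα (neg_notMem_posSystem hα.1)
  | succ n ih =>
    rw [pow_succ'] at hx
    obtain ⟨_, ⟨β, hβ, rfl⟩, y, hy, rfl⟩ := Set.mem_mul.1 hx
    have hyα : y α ∈ unitRoots W :=
      map_mem_unitRoots (Subgroup.pow_subset simpleReflections_subset hy) hα.1.1
    rcases ha.mem_or_neg_mem_posUnitRoots hyα with hpos | hneg
    · have hyαβ : y α = β := by
        by_contra hne
        exact neg_notMem_posSystem (hβ.2 _ hpos hne) hxα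
      refine ⟨n, rfl, ?_⟩
      rwa [← hyαβ, reflAlong_map, inv_mul_cancel_right, mul_assoc, reflAlong_mul_self, mul_one]
    · obtain ⟨m, rfl, hm⟩ := ih hy hneg
      refine ⟨m + 1, rfl, ?_⟩
      rw [pow_succ', mul_assoc]
      exact Set.mul_mem_mul ⟨β, hβ, rfl⟩ hm

lemma map_mem_posUnitRoots_of_apply_eq_self {x : V ≃ₗᵢ[ℝ] V} (hx : x ∈ W) (hxa : x a = a) {α : V}
    (hα : α ∈ posUnitRoots W a) : x α ∈ posUnitRoots W a := by
  refine ⟨map_mem_unitRoots hx hα.1, ?_⟩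
  rw [← hxa, x.inner_map_map]
  exact hα.2

lemma IsGeneric.eq_one_of_mem_pow_of_apply_eq_self (ha : IsGeneric W a) {n : ℕ} {x : V ≃ₗᵢ[ℝ] V}
    (hx : x ∈ simpleReflections W a ^ n) (hxa : x a = a) : x = 1 := by
  induction n using Nat.strong_induction_on with
  | _ n ih =>
    rcases n with _ | n
    · simpa using hx
    · rw [pow_succ] at hx
      obtain ⟨y, hy, _, ⟨α, hα, rfl⟩, rfl⟩ := Set.mem_mul.1 hx
      have hxW : y * reflAlong α ∈ W :=
        mul_mem (Subgroup.pow_subset simpleReflections_subset hy) hα.1.1.2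
      have hyα : -(y α) ∈ posUnitRoots W a := by
        simpa [reflAlong_self] using map_mem_posUnitRoots_of_apply_eq_self hxW hxa hα.1
      obtain ⟨m, rfl, hm⟩ := ha.exchange hα hy hyα
      exact ih m (by omega) hm

theorem IsReflectionGroup.eq_one_of_apply_eq_self (hW : IsReflectionGroup W)
    (hWfin : (W : Set (V ≃ₗᵢ[ℝ] V)).Finite) (ha : IsGeneric W a) {x : V ≃ₗᵢ[ℝ] V} (hx : x ∈ W)
    (hxa : x a = a) : x = 1 := by
  obtain ⟨n, hn⟩ := exists_mem_pow_of_mem_closure inv_simpleReflections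
    (hW.le_closure_simpleReflections hWfin ha hx)
  exact ha.eq_one_of_mem_pow_of_apply_eq_self hn hxa

end ReflectionGroup

/-! ### Convex hulls of orbits -/

lemma mem_of_mem_convexHull_of_mem_sphere {E : Type*} [NormedAddCommGroup E] [NormedSpace ℝ E]
    [StrictConvexSpace ℝ E] {s : Set E} {c x : E} {r : ℝ} (hs : s ⊆ Metric.closedBall c r)
    (hx : x ∈ convexHull ℝ s) (hxr : x ∈ Metric.sphere c r) : x ∈ s := by
  rcases subsingleton_or_nontrivial E with _ | _
  · obtain ⟨y, hy⟩ := convexHull_nonempty_iff.1 ⟨x, hx⟩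
    exact Subsingleton.elim y x ▸ hy
  · rw [← StrictConvexSpace.extremePoints_closedBall_eq_sphere] at hxr
    exact extremePoints_convexHull_subset (inter_extremePoints_subset_extremePoints_of_subset
      (convexHull_min hs (convex_closedBall c r)) ⟨hx, hxr⟩)

section Orbit

variable {G : Subgroup (V ≃ₗᵢ[ℝ] V)} {u : V ≃ₗᵢ[ℝ] V} {a : V}

lemma mem_orbitSet_of_mem_permutahedron {x : V} (hx : x ∈ permutahedron G a) (hxa : ‖x‖ = ‖a‖) :
    x ∈ orbitSet G a := by
  refine mem_of_mem_convexHull_of_mem_sphere (c := 0) (r := ‖a‖) ?_ hx (by simpa using hxa)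
  rintro _ ⟨v, -, rfl⟩
  simp

lemma image_orbitSet (hu : u ∈ G) (a : V) : u '' orbitSet G a = orbitSet G a := by
  refine Set.Subset.antisymm ?_ ?_
  · rintro _ ⟨_, ⟨v, hv, rfl⟩, rfl⟩
    exact ⟨u * v, mul_mem hu hv, rfl⟩
  · rintro _ ⟨v, hv, rfl⟩
    exact ⟨_, ⟨u⁻¹ * v, mul_mem (inv_mem hu) hv, rfl⟩, by simp⟩

lemma image_permutahedron (hu : u ∈ G) (a : V) : u '' permutahedron G a = permutahedron G a := by
  have h := u.toLinearEquiv.toLinearMap.image_convexHull (orbitSet G a)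
  exact h.trans (congrArg (convexHull ℝ) (image_orbitSet hu a))

lemma map_mem_orbitSet_of_image_permutahedron_eq (h : u '' permutahedron G a = permutahedron G a) :
    u a ∈ orbitSet G a := by
  refine mem_orbitSet_of_mem_permutahedron ?_ (u.norm_map a)
  exact h ▸ Set.mem_image_of_mem u (subset_convexHull ℝ _ ⟨1, one_mem G, rfl⟩)

end Orbit

lemma image_eq_image_iff_inv_mul_image_eq (w g : V ≃ₗᵢ[ℝ] V) (s : Set V) :
    w '' s = g '' s ↔ (w⁻¹ * g) '' s = s := by
  have hg : ⇑g = w ∘ (w⁻¹ * g) := by rw [← LinearIsometryEquiv.coe_mul, mul_inv_cancel_left]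
  rw [hg, Set.image_comp, w.injective.image_injective.eq_iff, eq_comm]

/-! ### Faces and cosets -/

lemma IsRootSystem.mem_of_isReflAlong_s12 {W : Subgroup (V ≃ₗᵢ[ℝ] V)} {Φ : Set V}
    (hΦ : IsRootSystem W Φ) {s : V ≃ₗᵢ[ℝ] V} {α : V} (hα : α ∈ Φ) (hs : IsReflAlong s α) :
    s ∈ W := by
  rw [hΦ.gen]
  exact Subgroup.subset_closure ⟨α, hα, hs⟩

lemma IsRootSystem.isReflectionGroup {W : Subgroup (V ≃ₗᵢ[ℝ] V)} {Φ : Set V}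
    (hΦ : IsRootSystem W Φ) : IsReflectionGroup W := by
  refine le_antisymm ?_ ((Subgroup.closure_le W).2 fun s hs => hs.2)
  refine (le_of_eq hΦ.gen).trans (Subgroup.closure_mono ?_)
  rintro s ⟨α, hα, hs⟩
  exact ⟨⟨α, hs⟩, hΦ.mem_of_isReflAlong_s12 hα hs⟩

lemma IsRootSystem.genSubgroup_le {W : Subgroup (V ≃ₗᵢ[ℝ] V)} {Φ I : Set V}
    (hΦ : IsRootSystem W Φ) (hI : I ⊆ Φ) : genSubgroup I ≤ W := by
  rw [genSubgroup, Subgroup.closure_le]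
  rintro s ⟨α, hα, hs⟩
  exact hΦ.mem_of_isReflAlong_s12 (hI hα) hs

theorem face_translate_eq_iff_coset_eq_general {W G : Subgroup (V ≃ₗᵢ[ℝ] V)}
    (hW : IsReflectionGroup W) (hWfin : (W : Set (V ≃ₗᵢ[ℝ] V)).Finite) {a : V}
    (ha : IsGeneric W a) (hG : G ≤ W) {w g : V ≃ₗᵢ[ℝ] V} (hw : w ∈ W) (hg : g ∈ W) :
    w '' permutahedron G a = g '' permutahedron G a ↔ w⁻¹ * g ∈ G := by
  rw [image_eq_image_iff_inv_mul_image_eq]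
  refine ⟨fun h => ?_, fun h => image_permutahedron h a⟩
  obtain ⟨v, hv, hva⟩ := map_mem_orbitSet_of_image_permutahedron_eq h
  have hfix : (v⁻¹ * (w⁻¹ * g)) a = a := by
    rw [LinearIsometryEquiv.coe_mul, Function.comp_apply, hva]
    exact v.symm_apply_apply a
  have hone : v⁻¹ * (w⁻¹ * g) = 1 :=
    hW.eq_one_of_apply_eq_self hWfin ha (mul_mem (inv_mem (hG hv)) (mul_mem (inv_mem hw) hg)) hfix
  exact inv_mul_eq_one.1 hone ▸ hv

/-- two translates of the face `F_I` coincide iff the corresponding cosets of the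
standard parabolic subgroup `W_I` coincide: `w(F_I) = g(F_I) ↔ w⁻¹g ∈ W_I`. -/
theorem face_translate_eq_iff_coset_eq [FiniteDimensional ℝ V]
    (W : Subgroup (V ≃ₗᵢ[ℝ] V)) (hWfin : (W : Set (V ≃ₗᵢ[ℝ] V)).Finite)
    (Φ : Set V) (hΦ : IsRootSystem W Φ) (a : V) (ha : IsGeneric W a)
    (Δ : Set V) (hΔ : IsSimpleSystem (posSystem a Φ) Δ)
    (I : Set V) (hI : I ⊆ Δ)
    (w g : V ≃ₗᵢ[ℝ] V) (hw : w ∈ W) (hg : g ∈ W) :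
    (⇑w) '' permutahedron (genSubgroup I) a = (⇑g) '' permutahedron (genSubgroup I) a ↔
      w⁻¹ * g ∈ genSubgroup I :=
  face_translate_eq_iff_coset_eq_general hΦ.isReflectionGroup hWfin ha
    (hΦ.genSubgroup_le fun _ hα => (hΔ.1 (hI hα)).1) hw hg
end
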